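/- arXiv:2012.01324 — 5 statements merged into one kernel-verified Lean document; each statement's English description precedes it below -/
import Mathlib

section
/- Let L/K be a finite extension of fields of degree d, and let A be a finite-dimensional central simple algebra over K which is split by L, i.e. the base change A ⊗_K L is isomorphic as an L-algebra to a matrix algebra Mat_n(L) for some n ≥ 1. Then the class of A in the Brauer group Br(K) is killed by d; equivalently, the d-fold tensor power A ⊗_K A ⊗_K ⋯ ⊗_K A (d factors) is isomorphic as a K-algebra to a matrix algebra over K. In particular, the kernel of the base-change map Br(K) → Br(L) is killed by d. -/
/-!
The vector space `V = L^n`, on which `A` acts through a splitting `θ : L ⊗ A ≃ M_n(L)`, is a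
`K`-vector space of dimension `n d`. After base change to `L` it is a module over
`L ⊗ A ≃ M_n(L)`, so it becomes `S ⊗ U`, with `S = L^n` the standard module and `U` a
multiplicity space of dimension `d` (`exists_conj`). The subspace `S^{⊗ d} ⊗ Λ^d U` of
`L ⊗ V^{⊗ d}` has dimension `n^d`, since `Λ^d U` is a line, and is stable under `A^{⊗ d}`.

The point is that this subspace is the base change of a `K`-subspace `M` of `V^{⊗ d}`. It is the
image of an explicit operator (`altProj`). Two `K`-algebra maps from `L` to a local ring `R` give
two decompositions `S ⊗ U` of the same `R ⊗ V`, which by Skolem–Noether over `R` differ by a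
matrix of the form `P ⊗ H`. The `d`-th tensor power of such a matrix commutes with
antisymmetrization, `H` acting on `Λ^d U` by `det H`, so the two operators agree (`altProj_map_eq`).
Applied to the localizations of `L ⊗ L`, this
shows that the entries of the operator satisfy `l ⊗ 1 = 1 ⊗ l`, hence lie in `K`
(`exists_descend`). No separability of `L/K` is needed.

Finally `A^{⊗ d}`, of dimension `n^{2d}`, acts faithfully on `M`, of dimension at most `n^d`,
so the action is an isomorphism of `A^{⊗ d}` with `End_K(M)` (`exists_algEquiv_matrix`).
-/

open scoped TensorProduct PiTensorProduct

namespace BrauerDegree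

open Matrix
open scoped Kronecker

/-! ### Kronecker powers and antisymmetrization -/

section Kron
variable {R : Type*} [CommRing R] {d : ℕ} {l m n : Type*}

/-- The Kronecker product of `d` matrices of the same shape, with rows and columns indexed by
tuples. -/
def kronPow (x : Fin d → Matrix m n R) : Matrix (Fin d → m) (Fin d → n) R :=
  Matrix.of fun f g => ∏ i, x i (f i) (g i)

lemma kronPow_mul [Fintype m] (x : Fin d → Matrix l m R) (y : Fin d → Matrix m n R) :
    kronPow x * kronPow y = kronPow (fun i => x i * y i) := by
  classical
  ext f g
  simp only [kronPow, Matrix.mul_apply, Matrix.of_apply, Finset.prod_univ_sum,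
    Fintype.piFinset_univ, Finset.prod_mul_distrib]

lemma kronPow_one [DecidableEq m] : kronPow (fun _ : Fin d => (1 : Matrix m m R)) = 1 := by
  ext f g
  simp only [kronPow, Matrix.of_apply, Matrix.one_apply, Finset.prod_ite_zero]
  simp [funext_iff]

lemma kronPow_map {S : Type*} [CommRing S] (φ : R →+* S) (x : Fin d → Matrix m n R) :
    (kronPow x).map φ = kronPow (fun i => (x i).map φ) := by
  ext f g
  simp [kronPow]

lemma kronPow_transpose (x : Fin d → Matrix m n R) :
    (kronPow x)ᵀ = kronPow (fun i => (x i)ᵀ) := rfl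

variable (R) in
/-- The sign of a tuple `g` of `d` indices: the sign of `g` if it is a permutation, else `0`.
It is the coordinate along `g` of the generator `e₁ ∧ ⋯ ∧ e_d` of the top exterior power,
embedded in the `d`-th tensor power. -/
def eps (g : Fin d → Fin d) : R := ((1 : Matrix (Fin d) (Fin d) R).submatrix g id).det

/-- `H` acts on the antisymmetric tensor `eps` in `(R^d)^{⊗ d}` by its determinant. -/
lemma sum_prod_mul_eps (H : Matrix (Fin d) (Fin d) R) (h : Fin d → Fin d) :
    ∑ g : Fin d → Fin d, (∏ i, H (h i) (g i)) * eps R g = H.det * eps R h := by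
  have h1 : H.submatrix h id = (1 : Matrix (Fin d) (Fin d) R).submatrix h id * H := by
    ext i j
    simp [Matrix.mul_apply, Matrix.one_apply]
  have h2 : (H.submatrix h id).det = H.det * eps R h := by
    rw [h1, Matrix.det_mul, mul_comm, eps]
  rw [← h2]
  have h3 : (H.submatrix h id) =
      fun i => ∑ k, H (h i) k • (1 : Matrix (Fin d) (Fin d) R) k := by
    ext i j
    simp [Matrix.one_apply, Finset.sum_apply]
  have h4 : (H.submatrix h id).det = Matrix.detRowAlternating.toMultilinearMap
      (fun i => ∑ k, H (h i) k • (1 : Matrix (Fin d) (Fin d) R) k) := by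
    rw [h3]; rfl
  rw [h4, MultilinearMap.map_sum]
  refine Finset.sum_congr rfl fun g _ => ?_
  rw [MultilinearMap.map_smul_univ]
  rfl

variable (R) in
/-- The matrix of the embedding of `(R^n)^{⊗ d}` in `(R^n ⊗ R^d)^{⊗ d}` given by tensoring with
the antisymmetric tensor `eps` in the factors `R^d`. -/
def altCol (n d : ℕ) : Matrix (Fin d → Fin n × Fin d) (Fin d → Fin n) R :=
  Matrix.of fun φ f => if (fun i => (φ i).1) = f then eps R (fun i => (φ i).2) else 0

/-- The operators `Q i ⊗ H` preserve the image of `altCol`, on which `H` acts by the scalar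
`det H`. -/
lemma kronPow_mul_altCol {n : ℕ} (Q : Fin d → Matrix (Fin n) (Fin n) R)
    (H : Matrix (Fin d) (Fin d) R) :
    kronPow (fun i => Q i ⊗ₖ H) * altCol R n d = H.det • (altCol R n d * kronPow Q) := by
  ext φ f
  rw [Matrix.mul_apply, ← (Equiv.arrowProdEquivProdArrow (Fin d) (fun _ => Fin n)
    (fun _ => Fin d)).symm.sum_comp, Fintype.sum_prod_type]
  simp only [altCol, kronPow, Matrix.of_apply, Matrix.smul_apply, Matrix.mul_apply,
    Equiv.arrowProdEquivProdArrow, Equiv.coe_fn_symm_mk, Matrix.kroneckerMap_apply,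
    Finset.prod_mul_distrib, mul_ite, mul_zero, ite_mul, zero_mul, smul_eq_mul,
    Finset.sum_ite_eq, Finset.mem_univ, if_true]
  rw [Finset.sum_comm]
  simp only [Finset.sum_ite_eq', Finset.mem_univ, if_true, mul_assoc]
  rw [← Finset.mul_sum, sum_prod_mul_eps]
  ring

lemma altCol_transpose_mul_kronPow {n : ℕ} (Q : Fin d → Matrix (Fin n) (Fin n) R)
    (H : Matrix (Fin d) (Fin d) R) :
    (altCol R n d)ᵀ * kronPow (fun i => Q i ⊗ₖ H) = H.det • (kronPow Q * (altCol R n d)ᵀ) := by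
  have := congrArg Matrix.transpose (kronPow_mul_altCol (fun i => (Q i)ᵀ) Hᵀ)
  simpa [Matrix.transpose_mul, kronPow_transpose, Matrix.kroneckerMap_transpose] using this

lemma altCol_map {S : Type*} [CommRing S] (φ : R →+* S) (n : ℕ) :
    (altCol R n d).map φ = altCol S n d := by
  ext ψ f
  simp only [altCol, Matrix.map_apply, Matrix.of_apply, eps]
  split_ifs
  · rw [RingHom.map_det]
    congr 1
    ext i j
    simp [Matrix.one_apply, apply_ite φ]
  · simp

variable (R) in
/-- The matrix sending `e_f` to the tensor of the `e_{f i} ⊗ e_i`. Its role is to provide one-sided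
inverses of `altCol` and its transpose, valid in every characteristic. -/
def diagCol (n d : ℕ) : Matrix (Fin d → Fin n × Fin d) (Fin d → Fin n) R :=
  Matrix.of fun φ f => if φ = (fun i => (f i, i)) then 1 else 0

lemma altCol_transpose_mul_diagCol (n : ℕ) : (altCol R n d)ᵀ * diagCol R n d = 1 := by
  ext f g
  simp [Matrix.mul_apply, altCol, diagCol, Matrix.one_apply, eq_comm]
  have h : eps R (fun i : Fin d => i) = 1 := by
    have : (fun i : Fin d => i) = id := rfl
    simp [eps, this]
  simp [h]

lemma diagCol_transpose_mul_altCol (n : ℕ) : (diagCol R n d)ᵀ * altCol R n d = 1 := by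
  have := congrArg Matrix.transpose (altCol_transpose_mul_diagCol (R := R) (d := d) n)
  simpa [Matrix.transpose_mul] using this

end Kron

/-! ### Representations of matrix algebras over local rings -/

/-- Every representation of `M_n(L)` on a free module of rank `n k` over a local `L`-algebra `R` is
isomorphic to `k` copies of the standard one. The multiplicity module is the image `U` of the
matrix unit `E₀₀`; it is a direct summand of a free module, hence free since `R` is local. -/
lemma exists_conj {L R : Type*} [Field L] [CommRing R] [IsLocalRing R] [Algebra L R]
    {n k : ℕ} (hn : 0 < n) {κ : Type*} [Fintype κ] [DecidableEq κ]
    (hκ : Fintype.card κ = n * k)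
    (F : Matrix (Fin n) (Fin n) L →ₐ[L] Matrix κ κ R) :
    ∃ (T : Matrix κ (Fin n × Fin k) R) (T' : Matrix (Fin n × Fin k) κ R),
      T * T' = 1 ∧ T' * T = 1 ∧
      ∀ x, F x * T = T * (x.map (algebraMap L R) ⊗ₖ (1 : Matrix (Fin k) (Fin k) R)) := by
  classical
  let o : Fin n := ⟨0, hn⟩
  let E (i j : Fin n) : (κ → R) →ₗ[R] (κ → R) := Matrix.toLin' (F (Matrix.single i j 1))
  have hE (i j l : Fin n) (w : κ → R) : E i j (E j l w) = E i l w := by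
    simp only [E]
    rw [← LinearMap.comp_apply, ← Matrix.toLin'_mul, ← map_mul]
    simp
  have hE0 (i j j' l : Fin n) (h : j ≠ j') (w : κ → R) : E i j (E j' l w) = 0 := by
    simp only [E]
    rw [← LinearMap.comp_apply, ← Matrix.toLin'_mul, ← map_mul]
    simp [h]
  have hE1 (w : κ → R) : ∑ i, E i i w = w := by
    simp only [E]
    rw [← LinearMap.sum_apply, ← map_sum, ← map_sum, Matrix.sum_single_one, map_one,
      Matrix.toLin'_one, LinearMap.id_apply]
  let U : Submodule R (κ → R) := LinearMap.range (E o o)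
  have hU (u : U) : E o o u = u := by
    obtain ⟨_, w, rfl⟩ := u
    exact hE _ _ _ _
  let toU (i : Fin n) : (κ → R) →ₗ[R] U := (E o i).codRestrict U (fun w => ⟨E o i w, hE _ _ _ _⟩)
  have htoU (i : Fin n) (w : κ → R) : (toU i w : κ → R) = E o i w := rfl
  let e : (κ → R) ≃ₗ[R] (Fin n → U) := LinearEquiv.ofLinearMap (LinearMap.pi toU)
    (∑ i, (E i o ∘ₗ U.subtype) ∘ₗ LinearMap.proj i)
    (by
      apply LinearMap.ext
      intro u
      ext1 j
      apply Subtype.ext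
      simp only [LinearMap.comp_apply, LinearMap.pi_apply, htoU,
        LinearMap.sum_apply, map_sum, LinearMap.id_apply, LinearMap.proj_apply,
        Submodule.subtype_apply, Submodule.coe_sum]
      rw [Finset.sum_eq_single j]
      · rw [hE, hU]
      · intro b _ hb
        exact hE0 _ _ _ _ hb.symm _
      · simp)
    (by
      apply LinearMap.ext
      intro w
      simp only [LinearMap.comp_apply, LinearMap.sum_apply, LinearMap.proj_apply,
        LinearMap.pi_apply, htoU, Submodule.subtype_apply, hE, hE1,
        LinearMap.id_apply])
  have hproj : Module.Projective R U :=
    Module.Projective.of_split U.subtype (toU o) (by ext1 u; exact Subtype.ext (hU u))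
  have hfin : Module.Finite R U := inferInstance
  have hfree : Module.Free R U := Module.free_of_flat_of_isLocalRing
  have hrank : Module.finrank R U = k := by
    have := e.finrank_eq
    rw [Module.finrank_fintype_fun_eq_card, hκ, Module.finrank_pi_fintype, Finset.sum_const,
      Finset.card_univ, Fintype.card_fin, smul_eq_mul] at this
    exact (Nat.eq_of_mul_eq_mul_left hn this).symm
  let bU : Module.Basis (Fin k) R U := Module.finBasisOfFinrankEq R U hrank
  let bW : Module.Basis (Fin n × Fin k) R (κ → R) :=
    ((Pi.basis (fun _ : Fin n => bU)).reindex (Equiv.sigmaEquivProd (Fin n) (Fin k))).map e.symm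
  have hbW (i : Fin n) (j : Fin k) : bW (i, j) = E i o (bU j) := by
    simp only [bW, Module.Basis.map_apply, Module.Basis.reindex_apply,
      Equiv.sigmaEquivProd_symm_apply, Pi.basis_apply]
    change (∑ l, (E l o ∘ₗ U.subtype) ∘ₗ LinearMap.proj l) (Pi.single i (bU j)) = _
    simp only [LinearMap.sum_apply, LinearMap.comp_apply, LinearMap.proj_apply]
    rw [Finset.sum_eq_single i]
    · simp
    · intro b _ hb
      simp [Pi.single_eq_of_ne hb]
    · simp
  refine ⟨(Pi.basisFun R κ).toMatrix bW, bW.toMatrix (Pi.basisFun R κ),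
    Module.Basis.toMatrix_mul_toMatrix_flip _ _, Module.Basis.toMatrix_mul_toMatrix_flip _ _, ?_⟩
  intro x
  ext p ⟨i, j⟩
  have h1 : (F x * (Pi.basisFun R κ).toMatrix bW) p (i, j) =
      (Matrix.toLin' (F x) (bW (i, j))) p := by
    simp [Matrix.mul_apply, Matrix.toLin'_apply, Matrix.mulVec, dotProduct,
      Module.Basis.toMatrix_apply]
  have h2 : Matrix.toLin' (F x) (bW (i, j)) = ∑ l, algebraMap L R (x l i) • bW (l, j) := by
    simp only [hbW]
    simp only [E]
    rw [← LinearMap.comp_apply, ← Matrix.toLin'_mul, ← map_mul]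
    have : x * Matrix.single i o 1 = ∑ l, x l i • Matrix.single l o (1 : L) := by
      ext a b
      simp [Matrix.mul_apply, Matrix.sum_apply, Matrix.single_apply, Finset.sum_ite_eq, ite_and]
    rw [this, map_sum, map_sum, LinearMap.sum_apply]
    refine Finset.sum_congr rfl fun l _ => ?_
    rw [map_smul, ← algebraMap_smul R, map_smul, LinearMap.smul_apply]
  rw [h1, h2]
  simp only [Matrix.mul_apply, Fintype.sum_prod_type, Matrix.kroneckerMap_apply,
    Matrix.one_apply, Matrix.map_apply, Module.Basis.toMatrix_apply, Pi.basisFun_repr,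
    Finset.sum_apply, Pi.smul_apply, smul_eq_mul]
  simp [mul_comm]

/-- Skolem–Noether over a local ring: the case `k = 1` of `exists_conj`. -/
lemma exists_conj_self {L R : Type*} [Field L] [CommRing R] [IsLocalRing R] [Algebra L R]
    {n : ℕ} (hn : 0 < n) (F : Matrix (Fin n) (Fin n) L →ₐ[L] Matrix (Fin n) (Fin n) R) :
    ∃ P P' : Matrix (Fin n) (Fin n) R,
      P * P' = 1 ∧ ∀ x, F x * P = P * x.map (algebraMap L R) := by
  obtain ⟨T, T', h1, -, h3⟩ := exists_conj (k := 1) hn (by simp) F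
  let e : Fin n ≃ Fin n × Fin 1 := (Equiv.prodUnique (Fin n) (Fin 1)).symm
  refine ⟨T.submatrix id e, T'.submatrix e id, ?_, fun x => ?_⟩
  · rw [Matrix.submatrix_mul_equiv, h1, Matrix.submatrix_id_id]
  · have hx : x.map (algebraMap L R) =
        (x.map (algebraMap L R) ⊗ₖ (1 : Matrix (Fin 1) (Fin 1) R)).submatrix e e := by
      ext i j
      simp [e]
    rw [hx, Matrix.submatrix_mul_equiv, ← h3]
    ext i j
    simp [Matrix.mul_apply]

/-- The commutant of `M_n(L) ⊗ 1` in `M_n(R) ⊗ M_k(R)` is `1 ⊗ M_k(R)`. -/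
lemma eq_one_kronecker {L R : Type*} [Field L] [CommRing R] [Algebra L R] {n k : ℕ} (hn : 0 < n)
    (G : Matrix (Fin n × Fin k) (Fin n × Fin k) R)
    (hG : ∀ x : Matrix (Fin n) (Fin n) L,
      (x.map (algebraMap L R) ⊗ₖ (1 : Matrix (Fin k) (Fin k) R)) * G =
        G * (x.map (algebraMap L R) ⊗ₖ (1 : Matrix (Fin k) (Fin k) R))) :
    ∃ H : Matrix (Fin k) (Fin k) R, G = (1 : Matrix (Fin n) (Fin n) R) ⊗ₖ H := by
  let o : Fin n := ⟨0, hn⟩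
  refine ⟨Matrix.of fun j l => G (o, j) (o, l), ?_⟩
  ext ⟨q, j⟩ ⟨b, l⟩
  have := congrFun (congrFun (hG (Matrix.single o q 1)) (o, j)) (b, l)
  simp only [Matrix.mul_apply, Fintype.sum_prod_type, Matrix.kroneckerMap_apply, Matrix.map_apply,
    Matrix.single_apply, Matrix.one_apply, apply_ite (algebraMap L R), map_one, map_zero,
    ite_and, ite_mul, mul_ite, one_mul, mul_one, zero_mul, mul_zero, Finset.sum_ite_eq,
    Finset.sum_ite_eq', Finset.mem_univ, if_true] at this
  simpa [Matrix.one_apply] using this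

/-! ### Descent of the antisymmetrizing operator -/

section Main
variable {K L A : Type*} [Field K] [Field L] [Algebra K L] [Ring A] [Algebra K A]
  {n d : ℕ}

/-- The `K`-algebra map from `A` to `M_n(L)` induced by a splitting `θ`. -/
def splitHom (θ : (L ⊗[K] A) ≃ₐ[L] Matrix (Fin n) (Fin n) L) :
    A →ₐ[K] Matrix (Fin n) (Fin n) L :=
  (θ.toAlgHom.restrictScalars K).comp Algebra.TensorProduct.includeRight

lemma splitHom_apply (θ : (L ⊗[K] A) ≃ₐ[L] Matrix (Fin n) (Fin n) L) (a : A) :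
    splitHom θ a = θ (1 ⊗ₜ a) := rfl

/-- A `K`-algebra map from `A` to an `L`-algebra extends `L`-linearly to `M_n(L)`, which is the base
change of `A`. -/
lemma exists_extend (θ : (L ⊗[K] A) ≃ₐ[L] Matrix (Fin n) (Fin n) L)
    {B : Type*} [Ring B] [Algebra K B] [Algebra L B] [IsScalarTower K L B] (ρ : A →ₐ[K] B) :
    ∃ F : Matrix (Fin n) (Fin n) L →ₐ[L] B, ∀ a, F (splitHom θ a) = ρ a := by
  have hc (l : L) (a : A) : Commute (Algebra.ofId L B l) (ρ a) := Algebra.commutes l (ρ a)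
  refine ⟨(Algebra.TensorProduct.lift (Algebra.ofId L B) ρ hc).comp θ.symm.toAlgHom, fun a => ?_⟩
  simp only [splitHom_apply, AlgHom.comp_apply]
  change Algebra.TensorProduct.lift _ _ _ (θ.symm (θ (1 ⊗ₜ[K] a))) = _
  rw [AlgEquiv.symm_apply_apply, Algebra.TensorProduct.lift_tmul, map_one, one_mul]

/-- `M_n(L)` is spanned over `L` by the image of `A`. -/
lemma split_induction (θ : (L ⊗[K] A) ≃ₐ[L] Matrix (Fin n) (Fin n) L)
    {p : Matrix (Fin n) (Fin n) L → Prop} (h0 : p 0) (hadd : ∀ x y, p x → p y → p (x + y))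
    (hs : ∀ (l : L) (a : A), p (l • splitHom θ a)) (x : Matrix (Fin n) (Fin n) L) : p x := by
  obtain ⟨y, rfl⟩ := θ.surjective x
  induction y using TensorProduct.induction_on with
  | zero => simpa using h0
  | tmul l a =>
    have := hs l a
    rwa [splitHom_apply, ← map_smul, TensorProduct.smul_tmul', smul_eq_mul, mul_one] at this
  | add x y hx hy => rw [map_add]; exact hadd _ _ hx hy

/-- The operator `v ↦ X Y v` on `κ^{⊗ d}`, where `X` and `Y` are the antisymmetrizing embedding and its
transpose, transported along mutually inverse `T` and `T'`. Its image corresponds to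
`(R^n)^{⊗ d} ⊗ Λ^d(R^d)`. It is not normalized to be a projection, which would require dividing by
`d!`, so it makes sense in every characteristic. -/
def altProj {R κ : Type*} [CommRing R] (T : Matrix κ (Fin n × Fin d) R)
    (T' : Matrix (Fin n × Fin d) κ R) : Matrix (Fin d → κ) (Fin d → κ) R :=
  (kronPow (fun _ : Fin d => T) * altCol R n d) *
    ((altCol R n d)ᵀ * kronPow (fun _ : Fin d => T'))

lemma altProj_map {R S κ : Type*} [CommRing R] [CommRing S] (φ : R →+* S)
    (T : Matrix κ (Fin n × Fin d) R) (T' : Matrix (Fin n × Fin d) κ R) :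
    (altProj T T').map φ = altProj (T.map φ) (T'.map φ) := by
  simp only [altProj, Matrix.map_mul, kronPow_map, Matrix.transpose_map, altCol_map φ]

/-- The operator `altProj T T'` has the same image under any two `K`-algebra maps from `L` to a local
ring `R`. By Skolem–Noether the two base changes of `T` differ by some `P' ⊗ H`, so the two operators
are obtained by inserting `(P' ⊗ H)^{⊗ d}` before or after `altCol * altColᵀ`. Both give `det H` times
the insertion of `P'^{⊗ d}` in the middle. -/
lemma altProj_map_eq (hn : 0 < n) (θ : (L ⊗[K] A) ≃ₐ[L] Matrix (Fin n) (Fin n) L)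
    {κ : Type*} [Fintype κ] [DecidableEq κ] (ρ : A →ₐ[K] Matrix κ κ K)
    (T : Matrix κ (Fin n × Fin d) L) (T' : Matrix (Fin n × Fin d) κ L)
    (hTT' : T * T' = 1) (hT'T : T' * T = 1)
    (hT : ∀ a, (ρ a).map (algebraMap K L) * T = T * (splitHom θ a ⊗ₖ (1 : Matrix (Fin d) (Fin d) L)))
    {R : Type*} [CommRing R] [IsLocalRing R] [Algebra L R] [Algebra K R] [IsScalarTower K L R]
    (φ : L →ₐ[K] R) :
    (altProj T T').map (algebraMap L R) = (altProj T T').map φ := by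
  obtain ⟨F, hF⟩ := exists_extend θ (φ.mapMatrix.comp (splitHom θ))
  obtain ⟨P, P', hP, hFP⟩ := exists_conj_self hn F
  have hθ (a : A) : (splitHom θ a).map φ * P = P * (splitHom θ a).map (algebraMap L R) := by
    rw [← hFP, hF]; rfl
  set ψ : L →+* R := algebraMap L R with hψ
  let φ' : L →+* R := φ.toRingHom
  have hρ (a : A) : (((ρ a).map (algebraMap K L)).map φ') = ((ρ a).map (algebraMap K L)).map ψ := by
    ext i j
    simp only [Matrix.map_apply, φ', ψ]
    rw [← IsScalarTower.algebraMap_apply]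
    exact φ.commutes _
  have k1 (f : L →+* R) (x : Matrix (Fin n) (Fin n) L) :
      (x ⊗ₖ (1 : Matrix (Fin d) (Fin d) L)).map f = x.map f ⊗ₖ (1 : Matrix (Fin d) (Fin d) R) := by
    ext ⟨i, j⟩ ⟨i', j'⟩
    simp [Matrix.one_apply, apply_ite f]
  have hT1 (f : L →+* R) (a : A) : ((ρ a).map (algebraMap K L)).map f * T.map f =
      T.map f * ((splitHom θ a).map f ⊗ₖ (1 : Matrix (Fin d) (Fin d) R)) := by
    rw [← Matrix.map_mul, hT, Matrix.map_mul, k1]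
  have hTT1 (f : L →+* R) : T.map f * T'.map f = 1 := by
    rw [← Matrix.map_mul, hTT', Matrix.map_one f f.map_zero f.map_one]
  have hTT2 (f : L →+* R) : T'.map f * T.map f = 1 := by
    rw [← Matrix.map_mul, hT'T, Matrix.map_one f f.map_zero f.map_one]
  have hT2 (f : L →+* R) (a : A) : ((splitHom θ a).map f ⊗ₖ (1 : Matrix (Fin d) (Fin d) R)) * T'.map f =
      T'.map f * ((ρ a).map (algebraMap K L)).map f := by
    calc _ = (T'.map f * T.map f) * ((splitHom θ a).map f ⊗ₖ (1 : Matrix (Fin d) (Fin d) R)) * T'.map f := by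
            rw [hTT2, Matrix.one_mul]
      _ = T'.map f * (((ρ a).map (algebraMap K L)).map f * T.map f) * T'.map f := by
            rw [hT1]; simp only [Matrix.mul_assoc]
      _ = T'.map f * ((ρ a).map (algebraMap K L)).map f * (T.map f * T'.map f) := by
            simp only [Matrix.mul_assoc]
      _ = _ := by rw [hTT1, Matrix.mul_one]
  let G := T'.map ψ * T.map φ' * (P ⊗ₖ (1 : Matrix (Fin d) (Fin d) R))
  have hGa (a : A) : ((splitHom θ a).map ψ ⊗ₖ (1 : Matrix (Fin d) (Fin d) R)) * G =
      G * ((splitHom θ a).map ψ ⊗ₖ (1 : Matrix (Fin d) (Fin d) R)) := by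
    have e1 : ((splitHom θ a).map φ' ⊗ₖ (1 : Matrix (Fin d) (Fin d) R)) *
          (P ⊗ₖ (1 : Matrix (Fin d) (Fin d) R)) =
        (P ⊗ₖ (1 : Matrix (Fin d) (Fin d) R)) * ((splitHom θ a).map ψ ⊗ₖ (1 : Matrix (Fin d) (Fin d) R)) := by
      rw [← Matrix.mul_kronecker_mul, ← Matrix.mul_kronecker_mul]
      congr 1
      exact hθ a
    simp only [G]
    rw [← Matrix.mul_assoc, ← Matrix.mul_assoc, hT2, ← hρ, Matrix.mul_assoc (T'.map ψ), hT1,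
      Matrix.mul_assoc, Matrix.mul_assoc, e1]
    simp only [Matrix.mul_assoc]
  have hG (x : Matrix (Fin n) (Fin n) L) :
      (x.map ψ ⊗ₖ (1 : Matrix (Fin d) (Fin d) R)) * G =
        G * (x.map ψ ⊗ₖ (1 : Matrix (Fin d) (Fin d) R)) := by
    induction x using split_induction θ with
    | h0 => simp [Matrix.map_zero]
    | hadd x y hx hy =>
      rw [Matrix.map_add _ (map_add ψ), Matrix.add_kronecker, Matrix.add_mul, Matrix.mul_add,
        hx, hy]
    | hs l a =>
      have : (l • splitHom θ a).map ψ = ψ l • (splitHom θ a).map ψ := by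
        ext; simp
      rw [this, Matrix.smul_kronecker, Matrix.smul_mul, Matrix.mul_smul, hGa]
  obtain ⟨H, hH⟩ := eq_one_kronecker hn G hG
  have hZ : T.map φ' = T.map ψ * (P' ⊗ₖ H) := by
    have e2 : (P' ⊗ₖ H) = G * (P' ⊗ₖ (1 : Matrix (Fin d) (Fin d) R)) := by
      rw [hH, ← Matrix.mul_kronecker_mul, Matrix.one_mul, Matrix.mul_one]
    have e3 : (P ⊗ₖ (1 : Matrix (Fin d) (Fin d) R)) * (P' ⊗ₖ (1 : Matrix (Fin d) (Fin d) R)) = 1 := by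
      rw [← Matrix.mul_kronecker_mul, hP, Matrix.one_mul, Matrix.one_kronecker_one]
    rw [e2]
    simp only [G]
    rw [Matrix.mul_assoc _ (P ⊗ₖ (1 : Matrix (Fin d) (Fin d) R)), e3, Matrix.mul_one,
      ← Matrix.mul_assoc, hTT1, Matrix.one_mul]
  have hZ' : (P' ⊗ₖ H) * T'.map φ' = T'.map ψ := by
    calc _ = T'.map ψ * (T.map ψ * (P' ⊗ₖ H)) * T'.map φ' := by
            rw [← Matrix.mul_assoc, hTT2, Matrix.one_mul]
      _ = _ := by rw [← hZ, Matrix.mul_assoc, hTT1, Matrix.mul_one]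
  change (altProj T T').map ψ = (altProj T T').map φ'
  rw [altProj_map, altProj_map]
  simp only [altProj]
  rw [hZ, ← kronPow_mul, ← hZ', ← kronPow_mul]
  rw [Matrix.mul_assoc (kronPow fun _ : Fin d => T.map ψ) (kronPow _), kronPow_mul_altCol,
    ← Matrix.mul_assoc (altCol R n d)ᵀ, altCol_transpose_mul_kronPow]
  simp only [Matrix.mul_assoc, Matrix.smul_mul, Matrix.mul_smul]

/-- `altProj T T'` is defined over `K`: by faithfully flat descent its entries `l` have to satisfy
`l ⊗ 1 = 1 ⊗ l` in `L ⊗ L`, which is checked at the localizations at maximal ideals. -/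
lemma exists_descend [FiniteDimensional K L] (hn : 0 < n)
    (θ : (L ⊗[K] A) ≃ₐ[L] Matrix (Fin n) (Fin n) L)
    {κ : Type*} [Fintype κ] [DecidableEq κ] (ρ : A →ₐ[K] Matrix κ κ K)
    (T : Matrix κ (Fin n × Fin d) L) (T' : Matrix (Fin n × Fin d) κ L)
    (hTT' : T * T' = 1) (hT'T : T' * T = 1)
    (hT : ∀ a, (ρ a).map (algebraMap K L) * T =
      T * (splitHom θ a ⊗ₖ (1 : Matrix (Fin d) (Fin d) L))) :
    ∃ s : Matrix (Fin d → κ) (Fin d → κ) K, s.map (algebraMap K L) = altProj T T' := by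
  have key (f g : Fin d → κ) : ∃ x : K, algebraMap K L x = altProj T T' f g := by
    have h := Algebra.IsEffective.eqLocus_includeLeft_includeRight
      (Algebra.IsEffective.of_faithfullyFlat K L)
    change altProj T T' f g ∈ Set.range (algebraMap K L)
    rw [← h]
    change (altProj T T' f g) ⊗ₜ[K] (1 : L) = (1 : L) ⊗ₜ[K] (altProj T T' f g)
    rw [← sub_eq_zero]
    refine eq_zero_of_localization _ fun J hJ => ?_
    have := congrFun (congrFun (altProj_map_eq hn θ ρ T T' hTT' hT'T hT
      (R := Localization.AtPrime J)
      ((IsScalarTower.toAlgHom K (L ⊗[K] L) (Localization.AtPrime J)).comp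
        Algebra.TensorProduct.includeRight)) f) g
    rw [map_sub, sub_eq_zero]
    rw [Matrix.map_apply, Matrix.map_apply,
      IsScalarTower.algebraMap_apply L (L ⊗[K] L) (Localization.AtPrime J)] at this
    exact this
  choose s hs using key
  exact ⟨Matrix.of s, by ext f g; exact hs f g⟩

/-! ### The tensor power of a representation -/

/-- The `d`-th tensor power of a matrix representation `ρ`, as a representation of the algebra
`A^{⊗ d}`. -/
def tensorRep {F m : Type*} [CommRing F] [Algebra K F] [Fintype m] [DecidableEq m] (d : ℕ)
    (ρ : A →ₐ[K] Matrix m m F) :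
    (⨂[K] _i : Fin d, A) →ₐ[K] Matrix (Fin d → m) (Fin d → m) F :=
  PiTensorProduct.liftAlgHom
    { toFun := fun a => kronPow (fun i => ρ (a i))
      map_update_add' := by
        intro _ a i x y
        ext f g
        simp only [kronPow, Matrix.of_apply, Matrix.add_apply,
          ← Finset.mul_prod_erase _ _ (Finset.mem_univ i)]
        simp only [Function.update_self, map_add, Matrix.add_apply, add_mul]
        congr 2 <;>
        · refine Finset.prod_congr rfl fun j hj => ?_
          simp [Function.update_of_ne (Finset.ne_of_mem_erase hj)]
      map_update_smul' := by
        intro _ a i c x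
        ext f g
        simp only [kronPow, Matrix.of_apply, Matrix.smul_apply,
          ← Finset.mul_prod_erase _ _ (Finset.mem_univ i)]
        simp only [Function.update_self, map_smul, Matrix.smul_apply, smul_mul_assoc]
        congr 2
        refine Finset.prod_congr rfl fun j hj => ?_
        simp [Function.update_of_ne (Finset.ne_of_mem_erase hj)] }
    (by
      change kronPow (fun i : Fin d => ρ 1) = 1
      rw [map_one, kronPow_one])
    (fun x y => by
      change kronPow (fun i : Fin d => ρ (x i * y i)) = kronPow _ * kronPow _
      rw [kronPow_mul]
      simp only [map_mul])

lemma tensorRep_tprod {F m : Type*} [CommRing F] [Algebra K F] [Fintype m] [DecidableEq m]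
    (ρ : A →ₐ[K] Matrix m m F) (a : Fin d → A) :
    tensorRep d ρ (PiTensorProduct.tprod K a) = kronPow (fun i => ρ (a i)) :=
  PiTensorProduct.lift.tprod _

/-- The representation of `A^{⊗ d}` on `(L^n)^{⊗ d}` is faithful: the coordinates of a tensor in a
product basis are recovered from the matrix entries, because a `K`-basis of `A` becomes an
`L`-basis of `M_n(L)`. -/
lemma tensorRep_splitHom_injective [FiniteDimensional K A]
    (θ : (L ⊗[K] A) ≃ₐ[L] Matrix (Fin n) (Fin n) L) :
    Function.Injective (tensorRep d (splitHom θ)) := by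
  let b := Module.finBasis K A
  let B := (Algebra.TensorProduct.basis L b).map θ.toLinearEquiv
  have hB (j) (x : Matrix (Fin n) (Fin n) L) :
      ∑ p, ∑ q, B.repr (Matrix.single p q 1) j * x p q = B.repr x j := by
    conv_rhs => rw [Matrix.matrix_eq_sum_single x]
    simp only [map_sum, Finsupp.finsetSum_apply]
    refine Finset.sum_congr rfl fun p _ => Finset.sum_congr rfl fun q _ => ?_
    have : Matrix.single p q (x p q) = x p q • Matrix.single p q (1 : L) := by
      rw [Matrix.smul_single, smul_eq_mul, mul_one]
    rw [this, map_smul, Finsupp.smul_apply, smul_eq_mul, mul_comm]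
  have hB1 (j) (a : A) : B.repr (splitHom θ a) j = algebraMap K L (b.repr a j) := by
    simp only [B, splitHom_apply, Module.Basis.map_repr, LinearEquiv.trans_apply]
    change (Algebra.TensorProduct.basis L b).repr (θ.symm (θ (1 ⊗ₜ[K] a))) j = _
    rw [AlgEquiv.symm_apply_apply, Algebra.TensorProduct.basis_repr_tmul]
    simp [Algebra.algebraMap_eq_smul_one]
  let bb := Basis.piTensorProduct (fun _ : Fin d => b)
  have hbb (J) (c : ⨂[K] _i : Fin d, A) :
      ∑ f : Fin d → Fin n, ∑ g : Fin d → Fin n,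
        (∏ i, B.repr (Matrix.single (f i) (g i) 1) (J i)) * tensorRep d (splitHom θ) c f g =
      algebraMap K L (bb.repr c J) := by
    induction c using PiTensorProduct.induction_on with
    | smul_tprod r a =>
      simp only [map_smul, tensorRep_tprod, Matrix.smul_apply, kronPow, Matrix.of_apply,
        Finsupp.smul_apply, bb, Basis.piTensorProduct_repr_tprod_apply, smul_eq_mul, map_mul,
        map_prod, ← hB1, mul_smul_comm, ← Finset.smul_sum, ← Finset.prod_mul_distrib]
      rw [Algebra.smul_def]
      congr 1
      rw [Finset.prod_congr rfl fun i _ => (hB (J i) (splitHom θ (a i))).symm]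
      simp only [Finset.prod_univ_sum, Fintype.piFinset_univ]
    | add x y hx hy =>
      simp only [map_add, Matrix.add_apply, mul_add, Finset.sum_add_distrib, hx, hy,
        Finsupp.add_apply]
  rw [injective_iff_map_eq_zero]
  intro c hc
  apply bb.repr.injective
  ext J
  have := hbb J c
  rw [hc] at this
  simpa using this.symm

/-! ### Cutting out the matrix algebra -/

lemma rank_le_rank_map {m : Type*} [Fintype m] [DecidableEq m] (s : Matrix m m K) :
    s.rank ≤ (s.map (algebraMap K L)).rank := by
  let v := Module.finBasis K (LinearMap.range s.mulVecLin)
  have hv : LinearIndependent K (fun i => (v i : m → K)) :=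
    v.linearIndependent.map' (Submodule.subtype _) (Submodule.ker_subtype _)
  have hvL : LinearIndependent L (fun i => algebraMap K L ∘ (v i : m → K)) :=
    linearIndependent_algebraMap_comp_iff.mpr hv
  have hmem (i) : algebraMap K L ∘ (v i : m → K) ∈
      LinearMap.range (s.map (algebraMap K L)).mulVecLin := by
    obtain ⟨w, hw⟩ := (v i).2
    refine ⟨algebraMap K L ∘ w, ?_⟩
    rw [← hw]
    ext p
    simp [Matrix.mulVec, dotProduct]
  have h2 : LinearIndependent L (fun i =>
      (⟨_, hmem i⟩ : LinearMap.range (s.map (algebraMap K L)).mulVecLin)) :=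
    LinearIndependent.of_comp (Submodule.subtype _) hvL
  have h3 := h2.fintype_card_le_finrank
  rwa [Fintype.card_fin] at h3

lemma finrank_tensorPower [FiniteDimensional K A] :
    Module.finrank K (⨂[K] _i : Fin d, A) = Module.finrank K A ^ d := by
  rw [Module.finrank_eq_card_basis (Basis.piTensorProduct (fun _ : Fin d => Module.finBasis K A))]
  simp

/-- If `s` commutes with a representation of `C`, then `C` acts on the image of `s`. If this action is
faithful and the image is small enough, then `C` is the full endomorphism algebra of the image. -/
lemma exists_algEquiv_matrix {C m : Type*} [Ring C] [Algebra K C] [FiniteDimensional K C]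
    [Nontrivial C] [Fintype m] [DecidableEq m] (ρ : C →ₐ[K] Matrix m m K) (s : Matrix m m K)
    (hcomm : ∀ c, ρ c * s = s * ρ c) (hinj : ∀ c, ρ c * s = 0 → c = 0)
    (hrank : s.rank ^ 2 ≤ Module.finrank K C) :
    ∃ r : ℕ, 0 < r ∧ Nonempty (C ≃ₐ[K] Matrix (Fin r) (Fin r) K) := by
  let M : Submodule K (m → K) := LinearMap.range s.mulVecLin
  have hM : Module.finrank K M = s.rank := rfl
  have hst (c : C) : ∀ x ∈ M, (ρ c).mulVecLin x ∈ M := by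
    rintro _ ⟨w, rfl⟩
    refine ⟨(ρ c).mulVecLin w, ?_⟩
    simp only [Matrix.mulVecLin_apply, Matrix.mulVec_mulVec, hcomm]
  let Φ : C →ₐ[K] Module.End K M := AlgHom.ofLinearMap
    { toFun := fun c => (ρ c).mulVecLin.restrict (hst c)
      map_add' := fun x y => by
        ext1 w
        apply Subtype.ext
        simp [LinearMap.restrict_apply]
      map_smul' := fun r x => by
        ext1 w
        apply Subtype.ext
        simp [LinearMap.restrict_apply] }
    (by
      ext1 w
      apply Subtype.ext
      simp [LinearMap.restrict_apply])
    (fun x y => by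
      ext1 w
      apply Subtype.ext
      simp [LinearMap.restrict_apply, Matrix.mulVec_mulVec])
  have hΦ : Function.Injective Φ := by
    rw [injective_iff_map_eq_zero]
    intro c hc
    apply hinj
    apply Matrix.mulVec_injective
    funext w
    have h1 := congrArg Subtype.val (LinearMap.congr_fun hc ⟨s.mulVecLin w, w, rfl⟩)
    have h2 : (ρ c).mulVec (s.mulVec w) = 0 := h1
    rw [← Matrix.mulVec_mulVec, h2, Matrix.zero_mulVec]
  let Ψ : C →ₐ[K] Matrix (Fin s.rank) (Fin s.rank) K :=
    (algEquivMatrix (Module.finBasisOfFinrankEq K M hM)).toAlgHom.comp Φ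
  have hΨ : Function.Injective Ψ := 
    (algEquivMatrix (Module.finBasisOfFinrankEq K M hM)).injective.comp hΦ
  have hfr : Module.finrank K (Matrix (Fin s.rank) (Fin s.rank) K) = s.rank ^ 2 := by
    simp [Module.finrank_matrix, sq]
  have heq : Module.finrank K C = Module.finrank K (Matrix (Fin s.rank) (Fin s.rank) K) :=
    le_antisymm (LinearMap.finrank_le_finrank_of_injective (f := Ψ.toLinearMap) hΨ)
      (hfr ▸ hrank)
  have hbij : Function.Bijective Ψ :=
    ⟨hΨ, (LinearMap.injective_iff_surjective_of_finrank_eq_finrank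
      (f := Ψ.toLinearMap) heq).mp hΨ⟩
  refine ⟨s.rank, ?_, ⟨AlgEquiv.ofBijective Ψ hbij⟩⟩
  have : 0 < Module.finrank K C := Module.finrank_pos
  rw [heq, hfr] at this
  exact Nat.pos_of_ne_zero fun h => by simp [h] at this

/-- The embedding `X` intertwines the action of `A^{⊗ d}` on `(L^n)^{⊗ d}` with that on
`κ^{⊗ d}`. -/
lemma tensorRep_mul_altCol (θ : (L ⊗[K] A) ≃ₐ[L] Matrix (Fin n) (Fin n) L)
    {κ : Type*} [Fintype κ] [DecidableEq κ] (ρ : A →ₐ[K] Matrix κ κ K)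
    (T : Matrix κ (Fin n × Fin d) L)
    (hT : ∀ a, (ρ a).map (algebraMap K L) * T =
      T * (splitHom θ a ⊗ₖ (1 : Matrix (Fin d) (Fin d) L)))
    (c : ⨂[K] _i : Fin d, A) :
    (tensorRep d ρ c).map (algebraMap K L) * (kronPow (fun _ : Fin d => T) * altCol L n d) =
      (kronPow (fun _ : Fin d => T) * altCol L n d) * tensorRep d (splitHom θ) c := by
  induction c using PiTensorProduct.induction_on with
  | smul_tprod r a =>
    have : ((tensorRep d ρ (r • PiTensorProduct.tprod K a)).map (algebraMap K L)) =
        r • kronPow (fun i => (ρ (a i)).map (algebraMap K L)) := by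
      rw [map_smul, tensorRep_tprod, ← kronPow_map]
      ext f g
      rw [Matrix.map_apply, Matrix.smul_apply, Matrix.smul_apply, Matrix.map_apply, smul_eq_mul,
        map_mul, Algebra.smul_def]
    rw [this, map_smul, tensorRep_tprod, Matrix.smul_mul, Matrix.mul_smul, ← Matrix.mul_assoc,
      kronPow_mul]
    simp only [hT]
    rw [← kronPow_mul, Matrix.mul_assoc, kronPow_mul_altCol, Matrix.det_one, one_smul,
      Matrix.mul_assoc]
  | add x y hx hy =>
    rw [map_add, map_add, Matrix.map_add _ (map_add _), Matrix.add_mul, Matrix.mul_add, hx, hy]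

lemma altCol_mul_tensorRep (θ : (L ⊗[K] A) ≃ₐ[L] Matrix (Fin n) (Fin n) L)
    {κ : Type*} [Fintype κ] [DecidableEq κ] (ρ : A →ₐ[K] Matrix κ κ K)
    (T' : Matrix (Fin n × Fin d) κ L)
    (hT' : ∀ a, T' * (ρ a).map (algebraMap K L) =
      (splitHom θ a ⊗ₖ (1 : Matrix (Fin d) (Fin d) L)) * T')
    (c : ⨂[K] _i : Fin d, A) :
    ((altCol L n d)ᵀ * kronPow (fun _ : Fin d => T')) *
        (tensorRep d ρ c).map (algebraMap K L) =
      tensorRep d (splitHom θ) c * ((altCol L n d)ᵀ * kronPow (fun _ : Fin d => T')) := by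
  induction c using PiTensorProduct.induction_on with
  | smul_tprod r a =>
    have : ((tensorRep d ρ (r • PiTensorProduct.tprod K a)).map (algebraMap K L)) =
        r • kronPow (fun i => (ρ (a i)).map (algebraMap K L)) := by
      rw [map_smul, tensorRep_tprod, ← kronPow_map]
      ext f g
      rw [Matrix.map_apply, Matrix.smul_apply, Matrix.smul_apply, Matrix.map_apply, smul_eq_mul,
        map_mul, Algebra.smul_def]
    rw [this, map_smul, tensorRep_tprod, Matrix.smul_mul, Matrix.mul_smul, Matrix.mul_assoc,
      kronPow_mul]
    simp only [hT']
    rw [← kronPow_mul, ← Matrix.mul_assoc, altCol_transpose_mul_kronPow, Matrix.det_one, one_smul,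
      Matrix.mul_assoc]
  | add x y hx hy =>
    rw [map_add, map_add, Matrix.map_add _ (map_add _), Matrix.add_mul, Matrix.mul_add, hx, hy]

theorem exists_tensorPower_algEquiv [FiniteDimensional K L] [FiniteDimensional K A]
    (hd : d = Module.finrank K L) (hn : 0 < n) (θ : (L ⊗[K] A) ≃ₐ[L] Matrix (Fin n) (Fin n) L) :
    ∃ m : ℕ, 0 < m ∧ Nonempty ((⨂[K] _i : Fin d, A) ≃ₐ[K] Matrix (Fin m) (Fin m) K) := by
  -- `ρ` is the action of `A` on `L^n`, regarded as a `K`-vector space of dimension `n d`.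
  let b : Module.Basis (Fin d) K L := Module.finBasisOfFinrankEq K L hd.symm
  let ρ : A →ₐ[K] Matrix (Fin n × Fin d) (Fin n × Fin d) K :=
    ((Matrix.compAlgEquiv (Fin n) (Fin d) K K).toAlgHom.comp
      (Algebra.leftMulMatrix b).mapMatrix).comp (splitHom θ)
  obtain ⟨F, hF⟩ := exists_extend θ ((Algebra.ofId K L).mapMatrix.comp ρ)
  obtain ⟨T, T', hTT', hT'T, hT0⟩ := exists_conj (k := d) hn (by simp) F
  have hT (a : A) : (ρ a).map (algebraMap K L) * T =
      T * (splitHom θ a ⊗ₖ (1 : Matrix (Fin d) (Fin d) L)) := by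
    have := hT0 (splitHom θ a)
    rw [hF] at this
    exact this
  have hT' (a : A) : T' * (ρ a).map (algebraMap K L) =
      (splitHom θ a ⊗ₖ (1 : Matrix (Fin d) (Fin d) L)) * T' := by
    calc _ = T' * (((ρ a).map (algebraMap K L) * T) * T') := by
          rw [Matrix.mul_assoc, hTT', Matrix.mul_one]
      _ = _ := by rw [hT, Matrix.mul_assoc, ← Matrix.mul_assoc T', hT'T, Matrix.one_mul]
  obtain ⟨s, hs⟩ := exists_descend hn θ ρ T T' hTT' hT'T hT
  have hX := tensorRep_mul_altCol θ ρ T hT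
  have hY := altCol_mul_tensorRep θ ρ T' hT'
  have hmapinj : Function.Injective fun x : Matrix (Fin d → Fin n × Fin d) (Fin d → Fin n × Fin d) K =>
      x.map (algebraMap K L) := Matrix.map_injective (algebraMap K L).injective
  have hXinv : ((diagCol L n d)ᵀ * kronPow (fun _ : Fin d => T')) *
      (kronPow (fun _ : Fin d => T) * altCol L n d) = 1 := by
    rw [Matrix.mul_assoc, ← Matrix.mul_assoc (kronPow _), kronPow_mul, hT'T, kronPow_one,
      Matrix.one_mul, diagCol_transpose_mul_altCol]
  have hYinv : ((altCol L n d)ᵀ * kronPow (fun _ : Fin d => T')) *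
      (kronPow (fun _ : Fin d => T) * diagCol L n d) = 1 := by
    rw [Matrix.mul_assoc, ← Matrix.mul_assoc (kronPow _), kronPow_mul, hT'T, kronPow_one,
      Matrix.one_mul, altCol_transpose_mul_diagCol]
  set X := kronPow (fun _ : Fin d => T) * altCol L n d with hXdef
  set Y := (altCol L n d)ᵀ * kronPow (fun _ : Fin d => T') with hYdef
  have hsXY : s.map (algebraMap K L) = X * Y := hs
  have hA : Module.finrank K A = n ^ 2 := by
    rw [← Module.finrank_baseChange (R := L), θ.toLinearEquiv.finrank_eq,
      Module.finrank_matrix]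
    simp [sq]
  have hC : Module.finrank K (⨂[K] _i : Fin d, A) = (n ^ 2) ^ d := by
    rw [finrank_tensorPower, hA]
  have : Module.Finite K (⨂[K] _i : Fin d, A) := Module.Finite.of_basis
    (Basis.piTensorProduct (fun _ : Fin d => Module.finBasis K A))
  have : Nontrivial (⨂[K] _i : Fin d, A) :=
    Module.nontrivial_of_finrank_pos (R := K) (by rw [hC]; positivity)
  refine exists_algEquiv_matrix (tensorRep d ρ) s (fun c => ?_) (fun c hc => ?_) ?_
  · apply hmapinj
    simp only [Matrix.map_mul, hsXY]
    rw [← Matrix.mul_assoc, hX, Matrix.mul_assoc X, Matrix.mul_assoc X, hY]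
  · apply tensorRep_splitHom_injective θ
    rw [map_zero]
    have h1 : X * (tensorRep d (splitHom θ) c * Y) = 0 := by
      rw [← Matrix.mul_assoc, ← hX, Matrix.mul_assoc, ← hsXY, ← Matrix.map_mul, hc]
      simp
    have h2 : tensorRep d (splitHom θ) c * Y = 0 := by
      rw [← Matrix.one_mul (tensorRep d (splitHom θ) c * Y), ← hXinv, Matrix.mul_assoc, h1,
        Matrix.mul_zero]
    rw [← Matrix.mul_one (tensorRep d (splitHom θ) c), ← hYinv, ← Matrix.mul_assoc, h2,
      Matrix.zero_mul]
  · have h1 : s.rank ≤ n ^ d := by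
      refine (rank_le_rank_map (L := L) s).trans ?_
      rw [hsXY]
      refine (Matrix.rank_mul_le_left X Y).trans ((Matrix.rank_le_card_width X).trans ?_)
      simp
    rw [hC, ← pow_mul, mul_comm, pow_mul]
    exact Nat.pow_le_pow_left h1 2

end Main

end BrauerDegree

/-- Let `L/K` be a finite extension of fields of degree `d`, and let `A` be a
finite-dimensional central simple `K`-algebra split by `L`, i.e. `L ⊗[K] A` is isomorphic as an
`L`-algebra to a matrix algebra `Mat_n(L)` for some `n ≥ 1`.  Then the class of `A` in `Br(K)`
is killed by `d`: the `d`-fold tensor power `A ⊗[K] ⋯ ⊗[K] A` is isomorphic as a `K`-algebra to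
a matrix algebra over `K`. -/
theorem brauer_class_killed_by_degree_of_split
    (K L : Type*) [Field K] [Field L] [Algebra K L] [FiniteDimensional K L]
    (d : ℕ) (hd : d = Module.finrank K L)
    (A : Type*) [Ring A] [Algebra K A] [FiniteDimensional K A]
    [Algebra.IsCentral K A] [IsSimpleRing A]
    (hsplit : ∃ n : ℕ, 0 < n ∧ Nonempty ((L ⊗[K] A) ≃ₐ[L] Matrix (Fin n) (Fin n) L)) :
    ∃ m : ℕ, 0 < m ∧
      Nonempty ((⨂[K] _i : Fin d, A) ≃ₐ[K] Matrix (Fin m) (Fin m) K) := by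
  obtain ⟨n, hn, ⟨θ⟩⟩ := hsplit
  exact BrauerDegree.exists_tensorPower_algEquiv hd hn θ
end

section
/- Let K be a field of characteristic p ≥ 0 that is finitely generated over its prime subfield, and let ℓ ≠ p be a prime number. Then the cardinalities of the groups Hom_{G_K}(μ_{ℓ^n}, ℤ/ℓ^n ℤ) of G_K-equivariant group homomorphisms from μ_{ℓ^n} to ℤ/ℓ^n ℤ are bounded independently of n; that is, there is a constant C (depending on K and ℓ) such that for every n ≥ 1 the group Hom_{G_K}(μ_{ℓ^n}, ℤ/ℓ^n ℤ) has at most C elements. -/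
/-!
Let `ζ` generate `μ_{ℓ^n}`. An equivariant `f` is determined by `f ζ`, so it suffices to show that
`f ζ` lies in the `C`-torsion of the cyclic group `ℤ/ℓ^n` for some `C` independent of `n`: that
torsion has at most `C` elements. If `f ζ` has order `r`, then equivariance forces the primitive
`r`-th root of unity `ζ ^ (ℓ^n / r)` to be fixed by Galois, hence to lie in `K`
(`exists_primitiveRoot_of_equivariant`). Here `r` is a power of `ℓ`, so everything follows once the
`ℓ`-power orders of roots of unity in `K` are bounded by some `N`
(`exists_primePow_le_of_isPrimitiveRoot`), with `C = N!`.

For that bound, let `F` be the prime field and `x` a transcendence basis of `K / F`. Then `K` is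
finite over `F(x)`, and an algebraic extension of `F` inside `K` is linearly disjoint from `F(x)`
(`linearIndependent_adjoin_of_algebraicIndependent`), so elements of `K` algebraic over `F` have
degree at most `[K : F(x)]` over `F`. In positive characteristic this bounds the cardinality of
`F(z)` for a root of unity `z`; in characteristic zero the degree of a primitive `ℓ ^ k`-th root of
unity is `φ (ℓ ^ k) ≥ ℓ ^ k / 2`.
-/

open scoped IntermediateField.algebraAdjoinAdjoin in
/-- An algebraic subextension `L / F` of `K / F` is linearly disjoint from a purely transcendental
one: `x` stays algebraically independent over `L`, so a relation among the `b i` with coefficients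
in `F[x]` is a polynomial identity over `L`, which can be read off one monomial at a time. -/
theorem linearIndependent_adjoin_of_algebraicIndependent {F K ι κ : Type*} [Field F] [Field K]
    [Algebra F K] {x : ι → K} (hx : AlgebraicIndependent F x) (L : IntermediateField F K)
    [Algebra.IsAlgebraic F L] {b : κ → L} (hb : LinearIndependent F b) :
    LinearIndependent (IntermediateField.adjoin F (Set.range x)) (fun i ↦ (b i : K)) := by
  have hxL : AlgebraicIndependent L x := hx.extendScalars L
  rw [← LinearIndependent.iff_fractionRing (Algebra.adjoin F (Set.range x)), linearIndependent_iff']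
  intro t g hg i hi
  have hP (j : κ) : ∃ P : MvPolynomial ι F, MvPolynomial.aeval x P = (g j : K) :=
    (Algebra.adjoin_range_eq_range_aeval F x).le (g j).2
  choose P hP using hP
  have hsum : ∑ j ∈ t, MvPolynomial.C (b j) * (P j).map (algebraMap F L) = 0 := by
    refine hxL.eq_zero_of_aeval_eq_zero _ ?_
    rw [map_sum, ← hg]
    refine Finset.sum_congr rfl fun j _ ↦ ?_
    rw [map_mul, MvPolynomial.aeval_C, MvPolynomial.aeval_map_algebraMap, hP, Algebra.smul_def,
      mul_comm]
    rfl
  have hPi : P i = 0 := by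
    ext m
    have hm := congrArg (MvPolynomial.coeff m) hsum
    simp only [MvPolynomial.coeff_sum, MvPolynomial.coeff_C_mul, MvPolynomial.coeff_map,
      MvPolynomial.coeff_zero] at hm
    refine linearIndependent_iff'.1 hb t (fun j ↦ (P j).coeff m) ?_ i hi
    simpa only [Algebra.smul_def, mul_comm] using hm
  exact Subtype.ext (by rw [← hP, hPi, map_zero]; rfl)

/-- The bound is `[K : F(x)]` for a transcendence basis `x` of `K / F`. -/
theorem exists_minpoly_natDegree_le (F K : Type*) [Field F] [Field K] [Algebra F K]
    [Algebra.EssFiniteType F K] :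
    ∃ d : ℕ, ∀ z : K, IsIntegral F z → (minpoly F z).natDegree ≤ d := by
  obtain ⟨s, hs⟩ := exists_isTranscendenceBasis F K
  have halg := hs.isAlgebraic_field
  set E := IntermediateField.adjoin F (Set.range (Subtype.val : s → K)) with hE
  have : Algebra.EssFiniteType E K := .of_comp F E K
  have : Module.Finite E K := Algebra.finite_of_essFiniteType_of_isAlgebraic
  refine ⟨Module.finrank E K, fun z hz ↦ ?_⟩
  have : FiniteDimensional F (IntermediateField.adjoin F {z}) :=
    IntermediateField.adjoin.finiteDimensional hz
  have h := linearIndependent_adjoin_of_algebraicIndependent hs.1 (IntermediateField.adjoin F {z})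
    (Module.finBasis F _).linearIndependent
  simpa [IntermediateField.adjoin.finrank hz] using h.fintype_card_le_finrank

theorem essFiniteType_of_closure_eq_top (F : Type*) {K : Type*} [Field F] [Field K] [Algebra F K]
    {S : Finset K} (hS : Subfield.closure (S : Set K) = ⊤) : Algebra.EssFiniteType F K := by
  rw [← IntermediateField.fg_top_iff]
  refine ⟨S, ?_⟩
  have : Subfield.closure (S : Set K) ≤ (IntermediateField.adjoin F (S : Set K)).toSubfield :=
    Subfield.closure_le.2 (IntermediateField.subset_adjoin F _)
  rw [hS] at this
  exact top_le_iff.1 fun y _ ↦ this (Subfield.mem_top y)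

/-- A finitely generated field contains primitive `ℓ ^ k`-th roots of unity for only finitely many
`k`: such a root has bounded degree over the prime field, while an extension of `𝔽_p` of bounded
degree has bounded cardinality, and over `ℚ` the degree is `φ (ℓ ^ k)`. -/
theorem exists_primePow_le_of_isPrimitiveRoot {K : Type*} [Field K]
    (hfg : ∃ S : Finset K, Subfield.closure (S : Set K) = ⊤) (ℓ : ℕ) (hℓ : ℓ.Prime) :
    ∃ N : ℕ, ∀ (k : ℕ) (z : K), IsPrimitiveRoot z (ℓ ^ k) → ℓ ^ k ≤ N := by
  obtain ⟨S, hS⟩ := hfg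
  obtain ⟨p, hp⟩ := CharP.exists K
  have hpos (k : ℕ) : 0 < ℓ ^ k := pow_pos hℓ.pos k
  obtain hp0 | rfl := CharP.char_is_prime_or_zero K p
  · have : Fact p.Prime := ⟨hp0⟩
    let := ZMod.algebra K p
    have := essFiniteType_of_closure_eq_top (ZMod p) hS
    obtain ⟨d, hd⟩ := exists_minpoly_natDegree_le (ZMod p) K
    refine ⟨p ^ d, fun k z hz ↦ ?_⟩
    have hint : IsIntegral (ZMod p) z := hz.isIntegral (hpos k) |>.tower_top
    set L := IntermediateField.adjoin (ZMod p) {z} with hL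
    have : FiniteDimensional (ZMod p) L := IntermediateField.adjoin.finiteDimensional hint
    have : Finite L := Module.finite_of_finite (ZMod p)
    have hzL : IsPrimitiveRoot (⟨z, IntermediateField.mem_adjoin_simple_self _ z⟩ : L) (ℓ ^ k) :=
      IsPrimitiveRoot.of_map_of_injective (f := algebraMap L K) (by exact hz)
        (algebraMap L K).injective
    have : NeZero (ℓ ^ k) := ⟨(hpos k).ne'⟩
    calc ℓ ^ k = Nat.card (rootsOfUnity (ℓ ^ k) L) := by
          simpa using hzL.card_rootsOfUnity.symm
      _ ≤ Nat.card L := Nat.card_le_card_of_injective (fun u ↦ ((u : Lˣ) : L))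
          (Units.val_injective.comp Subtype.val_injective)
      _ = p ^ (minpoly (ZMod p) z).natDegree := by
          rw [Module.natCard_eq_pow_finrank (K := ZMod p), Nat.card_zmod,
            IntermediateField.adjoin.finrank hint]
      _ ≤ p ^ d := Nat.pow_le_pow_right hp0.pos (hd z hint)
  · have : CharZero K := CharP.charP_to_charZero K
    have := essFiniteType_of_closure_eq_top ℚ hS
    obtain ⟨d, hd⟩ := exists_minpoly_natDegree_le ℚ K
    refine ⟨2 * d + 1, fun k z hz ↦ ?_⟩
    have h := hd z (hz.isIntegral (hpos k) |>.tower_top)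
    rw [← Polynomial.cyclotomic_eq_minpoly_rat hz (hpos k), Polynomial.natDegree_cyclotomic] at h
    rcases k with _ | k
    · simp
    rw [Nat.totient_prime_pow_succ hℓ] at h
    have : ℓ ≤ 2 * (ℓ - 1) := by have := hℓ.two_le; omega
    calc ℓ ^ (k + 1) = ℓ ^ k * ℓ := pow_succ ..
      _ ≤ ℓ ^ k * (2 * (ℓ - 1)) := Nat.mul_le_mul_left _ this
      _ ≤ _ := by linarith

/-- With `r` the order of `f ζ`, the primitive `r`-th root of unity `ζ ^ (m / r)` is Galois-invariant:
if `σ ζ = ζ ^ a`, equivariance gives `f ζ ^ a = f ζ`, that is, `a ≡ 1` modulo `r`. -/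
theorem exists_primitiveRoot_of_equivariant {K : Type*} [Field K] {m : ℕ} (hm : 0 < m)
    {G : Type*} [Group G] {ζ : rootsOfUnity m (SeparableClosure K)}
    (hζ : IsPrimitiveRoot ζ m)
    (f : rootsOfUnity m (SeparableClosure K) →* G)
    (hf : ∀ (σ : SeparableClosure K ≃ₐ[K] SeparableClosure K)
      (ζ : rootsOfUnity m (SeparableClosure K)), f (restrictRootsOfUnity σ m ζ) = f ζ) :
    ∃ z : K, IsPrimitiveRoot z (orderOf (f ζ)) := by
  have hdvd : orderOf (f ζ) ∣ m := by
    simpa only [← hζ.eq_orderOf] using orderOf_map_dvd f ζ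
  obtain ⟨c, hc⟩ := hdvd
  have hprim : IsPrimitiveRoot (ζ ^ c) (orderOf (f ζ)) := hζ.pow hm (hc.trans (mul_comm _ _))
  have hfix (σ : SeparableClosure K ≃ₐ[K] SeparableClosure K) :
      restrictRootsOfUnity σ m (ζ ^ c) = ζ ^ c := by
    have : NeZero m := ⟨hm.ne'⟩
    obtain ⟨a, ha⟩ := MonoidHom.map_cyclic (restrictRootsOfUnity σ m)
    have h1 : f ζ ^ (a - 1) = 1 := by
      rw [zpow_sub_one, ← map_zpow, ← ha, hf, mul_inv_cancel]
    rw [ha, ← mul_inv_eq_one, ← zpow_sub_one, hprim.zpow_eq_one_iff_dvd]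
    exact orderOf_dvd_iff_zpow_eq_one.2 h1
  have hprim' : IsPrimitiveRoot (((ζ ^ c : rootsOfUnity m (SeparableClosure K)) :
      (SeparableClosure K)ˣ) : SeparableClosure K) (orderOf (f ζ)) := by
    rw [IsPrimitiveRoot.coe_units_iff]
    exact hprim.map_of_injective (f := (rootsOfUnity m (SeparableClosure K)).subtype)
      Subtype.val_injective
  obtain ⟨z, hz⟩ := (InfiniteGalois.mem_range_algebraMap_iff_fixed (k := K) _).2 fun σ ↦ by
    have h := congrArg (fun u ↦ (((u : rootsOfUnity m (SeparableClosure K)) :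
      (SeparableClosure K)ˣ) : SeparableClosure K)) (hfix σ)
    exact h
  exact ⟨z, IsPrimitiveRoot.of_map_of_injective (f := algebraMap K (SeparableClosure K))
    (by rwa [hz]) (algebraMap K _).injective⟩

/-- Let `K` be a field of characteristic `p ≥ 0` that is finitely generated
over its prime subfield, and let `ℓ ≠ p` be a prime.  Then the cardinalities of the groups
`Hom_{G_K}(μ_{ℓ^n}, ℤ/ℓ^n ℤ)` of Galois-equivariant homomorphisms from the `ℓ^n`-th roots of
unity (in a separable closure of `K`) to `ℤ/ℓ^n ℤ` are bounded independently of `n`. -/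
theorem card_equivariant_hom_rootsOfUnity_bounded
    (K : Type*) [Field K] (hfg : ∃ S : Finset K, Subfield.closure (S : Set K) = ⊤)
    (p : ℕ) [CharP K p] (ℓ : ℕ) (hℓ : ℓ.Prime) (hℓp : ℓ ≠ p) :
    ∃ C : ℕ, ∀ n : ℕ, 1 ≤ n →
      Nat.card {f : rootsOfUnity (ℓ ^ n) (SeparableClosure K) →*
          Multiplicative (ZMod (ℓ ^ n)) //
        ∀ (σ : SeparableClosure K ≃ₐ[K] SeparableClosure K)
          (ζ : rootsOfUnity (ℓ ^ n) (SeparableClosure K)),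
          f (restrictRootsOfUnity σ (ℓ ^ n) ζ) = f ζ} ≤ C := by
  obtain ⟨N, hN⟩ := exists_primePow_le_of_isPrimitiveRoot hfg ℓ hℓ
  refine ⟨N.factorial, fun n _ ↦ ?_⟩
  have hℓK : (ℓ : K) ≠ 0 := by
    intro h
    rw [CharP.cast_eq_zero_iff K p] at h
    obtain h1 | h1 := (Nat.dvd_prime hℓ).1 h
    · exact CharP.char_ne_one K p h1
    · exact hℓp h1.symm
  have hm : 0 < ℓ ^ n := pow_pos hℓ.pos n
  have : NeZero (ℓ ^ n) := ⟨hm.ne'⟩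
  have : NeZero ((ℓ ^ n : ℕ) : SeparableClosure K) := by
    refine ⟨?_⟩
    have := (map_ne_zero (algebraMap K (SeparableClosure K))).2 hℓK
    push_cast
    exact pow_ne_zero n (by simpa using this)
  obtain ⟨ζ, hζ⟩ := HasEnoughRootsOfUnity.exists_primitiveRoot (SeparableClosure K) (ℓ ^ n)
  have hgen : IsPrimitiveRoot hζ.toRootsOfUnity (ℓ ^ n) := by
    rw [← IsPrimitiveRoot.coe_submonoidClass_iff, ← IsPrimitiveRoot.coe_units_iff]
    simpa using hζ
  have hgen' : ∀ y : rootsOfUnity (ℓ ^ n) (SeparableClosure K),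
      y ∈ Subgroup.zpowers hζ.toRootsOfUnity := by
    intro y
    have hy : (y : (SeparableClosure K)ˣ) ∈ Subgroup.zpowers
        ((hζ.toRootsOfUnity : rootsOfUnity (ℓ ^ n) _) : (SeparableClosure K)ˣ) := by
      rw [(IsPrimitiveRoot.coe_submonoidClass_iff.2 hgen).zpowers_eq]
      exact y.2
    obtain ⟨i, hi⟩ := hy
    exact ⟨i, Subtype.ext (by simpa using hi)⟩
  refine le_trans (Nat.card_le_card_of_injective
    (β := {t : Multiplicative (ZMod (ℓ ^ n)) // t ^ N.factorial = 1})
    (fun f ↦ ⟨f.1 hζ.toRootsOfUnity, ?_⟩) ?_) ?_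
  · rw [← orderOf_dvd_iff_pow_eq_one]
    obtain ⟨z, hz⟩ := exists_primitiveRoot_of_equivariant hm hgen f.1 f.2
    have hdvd : orderOf (f.1 hζ.toRootsOfUnity) ∣ ℓ ^ n := by
      conv_rhs => rw [hgen.eq_orderOf]
      exact orderOf_map_dvd _ _
    obtain ⟨k, -, hk⟩ := (Nat.dvd_prime_pow hℓ).1 hdvd
    rw [hk] at hz ⊢
    exact Nat.dvd_factorial (pow_pos hℓ.pos k) (hN k z hz)
  · intro f g hfg
    refine Subtype.ext (MonoidHom.ext fun y ↦ ?_)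
    obtain ⟨i, rfl⟩ := hgen' y
    simpa using congrArg (· ^ i) (Subtype.ext_iff.1 hfg)
  · have := IsCyclic.card_pow_eq_one_le (α := Multiplicative (ZMod (ℓ ^ n))) N.factorial_pos
    rw [Nat.card_eq_fintype_card, Fintype.card_subtype]
    convert this
end

section
/- Let K be a field of characteristic p ≥ 0 that is finitely generated over its prime subfield. Then for all but finitely many primes ℓ, the group Hom_{G_K}(μ_{ℓ^n}, ℤ/ℓ^n ℤ) of G_K-equivariant group homomorphisms from μ_{ℓ^n} to ℤ/ℓ^n ℤ vanishes for every n ≥ 1. That is, the set of primes ℓ ≠ p for which there exist some n ≥ 1 and some nonzero G_K-equivariant homomorphism μ_{ℓ^n} → ℤ/ℓ^n ℤ is finite. -/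
/-!
A nonzero equivariant `f : μ_{ℓ^n} → ℤ/ℓ^n` forces `μ_ℓ ⊆ K`: if `σ` raises a generator `ζ` of
`μ_{ℓ^n}` to the power `k`, then `f ζ` is a nontrivial `ℓ`-power torsion element killed by `k - 1`,
so `ℓ ∣ k - 1` and `σ` fixes the elements of order `ℓ`
(`exists_primitiveRoot_of_equivariant_hom`).

It remains to see that a finitely generated field contains primitive `ℓ`-th roots of unity for
only finitely many primes `ℓ`. Let `F` be the prime field and `x` a transcendence basis of `K/F`.
Since `x` stays algebraically independent over the algebraic closure of `F` in `K`, elements of `K`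
algebraic over `F` and linearly independent over `F` are linearly independent over `F(x)`, so their
number is at most `[K : F(x)]`, which is finite. Hence the degrees over `F` of the algebraic
elements of `K` are bounded (`exists_natDegree_minpoly_le`). A primitive `ℓ`-th root of unity has
degree `ℓ - 1` over `ℚ`, and if it has degree `m` over `𝔽_p` then `ℓ < p ^ m`.
-/

/-- Powers `1, ζ, …, ζ ^ (m - 1)` of an element of degree `m` over `F` remain linearly independent
over `F[x]` for an algebraically independent family `x`: the coefficients of a polynomial relation
over `F[x]`, viewed over the algebraic closure of `F` in `K`, are relations over `F`. -/
theorem linearIndependent_pow_adjoin {F K ι : Type*} [Field F] [Field K] [Algebra F K]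
    {x : ι → K} (hx : AlgebraicIndependent F x) {ζ : K} (hζ : IsAlgebraic F ζ) :
    LinearIndependent (Algebra.adjoin F (Set.range x))
      (fun i : Fin (minpoly F ζ).natDegree => ζ ^ (i : ℕ)) := by
  have hx' := hx.algebraicClosure
  have hz : ζ ∈ algebraicClosure F K := mem_algebraicClosure_iff.2 hζ
  set z : algebraicClosure F K := ⟨ζ, hz⟩
  rw [Fintype.linearIndependent_iff]
  intro g hg i
  have hrep : ∀ i, ∃ q : MvPolynomial ι F, MvPolynomial.aeval x q = (g i : K) := by
    intro i
    exact (Algebra.adjoin_range_eq_range_aeval F x).le (g i).2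
  choose q hq using hrep
  have hsum : (∑ i : Fin (minpoly F ζ).natDegree, MvPolynomial.C (z ^ (i : ℕ)) *
      MvPolynomial.map (algebraMap F (algebraicClosure F K)) (q i)) = 0 := by
    apply (injective_iff_map_eq_zero (MvPolynomial.aeval (R := algebraicClosure F K) x)).1 hx'
    rw [map_sum, ← hg]
    refine Finset.sum_congr rfl fun i _ => ?_
    rw [map_mul, MvPolynomial.aeval_map_algebraMap, hq, MvPolynomial.aeval_C, map_pow, mul_comm]
    rfl
  have hqi : q i = 0 := by
    ext s
    have hc := congrArg (fun P => algebraMap (algebraicClosure F K) K (MvPolynomial.coeff s P)) hsum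
    simp only [MvPolynomial.coeff_sum, MvPolynomial.coeff_C_mul, MvPolynomial.coeff_map,
      MvPolynomial.coeff_zero, map_zero, map_sum, map_mul] at hc
    refine Fintype.linearIndependent_iff.1 (linearIndependent_pow (K := F) ζ)
      (fun i => MvPolynomial.coeff s (q i)) ?_ i
    rw [← hc]
    refine Finset.sum_congr rfl fun i _ => ?_
    rw [Algebra.smul_def, mul_comm]
    rfl
  apply Subtype.ext
  rw [← hq i, hqi, map_zero]
  rfl

open scoped IntermediateField.algebraAdjoinAdjoin in
/-- In a finitely generated field extension `K/F`, the degrees over `F` of the algebraic elements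
are bounded, namely by `[K : F(x)]` for any transcendence basis `x`. -/
theorem exists_natDegree_minpoly_le (F K : Type*) [Field F] [Field K] [Algebra F K]
    [Algebra.EssFiniteType F K] :
    ∃ d : ℕ, ∀ ζ : K, IsAlgebraic F ζ → (minpoly F ζ).natDegree ≤ d := by
  obtain ⟨s, hs⟩ := exists_isTranscendenceBasis F K
  have halg := hs.isAlgebraic_field
  set x : s → K := Subtype.val
  have : Algebra.EssFiniteType (IntermediateField.adjoin F (Set.range x)) K :=
    Algebra.EssFiniteType.of_comp F _ K
  have : FiniteDimensional (IntermediateField.adjoin F (Set.range x)) K := by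
    exact Algebra.finite_of_essFiniteType_of_isAlgebraic
  refine ⟨Module.finrank (IntermediateField.adjoin F (Set.range x)) K, fun ζ hζ => ?_⟩
  have h := linearIndependent_pow_adjoin hs.1 hζ
  rw [LinearIndependent.iff_fractionRing (Algebra.adjoin F (Set.range x))
    (IntermediateField.adjoin F (Set.range x))] at h
  simpa using h.fintype_card_le_finrank

theorem finite_primes_isPrimitiveRoot (K : Type*) [Field K]
    (hfg : ∃ S : Finset K, Subfield.closure (S : Set K) = ⊤) (p : ℕ) [CharP K p] :
    {ℓ : ℕ | ℓ.Prime ∧ ∃ ζ : K, IsPrimitiveRoot ζ ℓ}.Finite := by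
  obtain ⟨S, hS⟩ := hfg
  -- `K` is finitely generated over any subfield; this is applied to `𝔽_p` and to `ℚ`.
  have hess : ∀ (F : Type) [Field F] [Algebra F K], Algebra.EssFiniteType F K := by
    intro F _ _
    refine IntermediateField.fg_top_iff.1 ⟨S, ?_⟩
    rw [eq_top_iff]
    intro y _
    have hy : y ∈ Subfield.closure (S : Set K) := hS ▸ Subfield.mem_top y
    exact (Subfield.closure_le (t := (IntermediateField.adjoin F (S : Set K)).toSubfield)).2
      (IntermediateField.subset_adjoin F _) hy
  rcases CharP.char_is_prime_or_zero K p with hp | rfl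
  · have : Fact p.Prime := ⟨hp⟩
    let := ZMod.algebra K p
    have := hess (ZMod p)
    obtain ⟨d, hd⟩ := exists_natDegree_minpoly_le (ZMod p) K
    refine (Set.finite_Iic (p ^ d)).subset ?_
    rintro ℓ ⟨hℓ, ζ, hζ⟩
    have hint : IsIntegral (ZMod p) ζ := hζ.isIntegral hℓ.pos |>.tower_top
    let E := IntermediateField.adjoin (ZMod p) {ζ}
    have : FiniteDimensional (ZMod p) E := IntermediateField.adjoin.finiteDimensional hint
    have : Finite E := Module.finite_of_finite (ZMod p)
    let z : E := IntermediateField.AdjoinSimple.gen (ZMod p) ζ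
    have hz : orderOf z = ℓ := by
      rw [hζ.eq_orderOf]
      exact (orderOf_injective (algebraMap E K : E →* K) (algebraMap E K).injective z).symm
    have hle : ℓ ≤ Nat.card E := hz ▸ orderOf_le_card
    refine hle.trans ?_
    rw [Module.natCard_eq_pow_finrank (K := ZMod p), Nat.card_zmod,
      IntermediateField.adjoin.finrank hint]
    exact Nat.pow_le_pow_right hp.pos (hd ζ hint.isAlgebraic)
  · have : CharZero K := CharP.charP_to_charZero K
    have := hess ℚ
    obtain ⟨d, hd⟩ := exists_natDegree_minpoly_le ℚ K
    refine (Set.finite_Iic (d + 1)).subset ?_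
    rintro ℓ ⟨hℓ, ζ, hζ⟩
    have hint : IsIntegral ℚ ζ := hζ.isIntegral hℓ.pos |>.tower_top
    have h := hd ζ hint.isAlgebraic
    rw [← Polynomial.cyclotomic_eq_minpoly_rat hζ hℓ.pos, Polynomial.natDegree_cyclotomic,
      Nat.totient_prime hℓ] at h
    simp only [Set.mem_Iic]
    omega

theorem exists_primitiveRoot_of_equivariant_hom (K : Type*) [Field K] (p : ℕ) [CharP K p]
    {ℓ n : ℕ} (hℓ : ℓ.Prime) (hℓp : ℓ ≠ p) (hn : 1 ≤ n)
    (f : rootsOfUnity (ℓ ^ n) (SeparableClosure K) →* Multiplicative (ZMod (ℓ ^ n)))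
    (hf : ∀ (σ : SeparableClosure K ≃ₐ[K] SeparableClosure K)
      (ζ : rootsOfUnity (ℓ ^ n) (SeparableClosure K)),
      f (restrictRootsOfUnity σ (ℓ ^ n) ζ) = f ζ) (hf1 : f ≠ 1) :
    ∃ ω : K, IsPrimitiveRoot ω ℓ := by
  have hℓK : NeZero (ℓ : K) := ⟨fun h => by
    have hdvd := (CharP.cast_eq_zero_iff K p ℓ).1 h
    rcases (Nat.dvd_prime hℓ).1 hdvd with h1 | h1
    · exact CharP.char_ne_one K p h1
    · exact hℓp h1.symm⟩
  have : NeZero ℓ := ⟨hℓ.ne_zero⟩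
  have : HasEnoughRootsOfUnity (SeparableClosure K) (ℓ ^ n) := inferInstance
  obtain ⟨ζ, hζ⟩ := IsCyclic.exists_generator
    (α := rootsOfUnity (ℓ ^ n) (SeparableClosure K))
  have hord : orderOf ζ = ℓ ^ n := by
    rw [orderOf_eq_card_of_forall_mem_zpowers hζ, HasEnoughRootsOfUnity.natCard_rootsOfUnity]
  have hfζ : f ζ ≠ 1 := by
    intro h
    refine hf1 (MonoidHom.ext fun y => ?_)
    obtain ⟨k, rfl⟩ := Subgroup.mem_zpowers_iff.1 (hζ y)
    simp [h]
  have hfpow : f ζ ^ (ℓ ^ n) = 1 := by 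
    rw [← map_pow, orderOf_dvd_iff_pow_eq_one.1 hord.dvd, map_one]
  have hdvd : ℓ ∣ orderOf (f ζ) := by
    obtain ⟨k, -, hk⟩ := (Nat.dvd_prime_pow hℓ).1 (orderOf_dvd_of_pow_eq_one hfpow)
    rw [hk]
    refine dvd_pow_self ℓ ?_
    rintro rfl
    exact hfζ (orderOf_eq_one_iff.1 (by simpa using hk))
  set ω := ζ ^ ℓ ^ (n - 1) with hω
  have hωord : orderOf ω = ℓ := by
    rw [hω, orderOf_pow_of_dvd (pow_ne_zero _ hℓ.ne_zero) 
      ((pow_dvd_pow ℓ (Nat.sub_le n 1)).trans hord.symm.dvd),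
      hord, Nat.pow_div (Nat.sub_le n 1) hℓ.pos, Nat.sub_sub_self hn, pow_one]
  have hfix : ∀ σ : SeparableClosure K ≃ₐ[K] SeparableClosure K,
      restrictRootsOfUnity σ (ℓ ^ n) ω = ω := by
    intro σ
    obtain ⟨k, hk⟩ := Subgroup.mem_zpowers_iff.1 (hζ (restrictRootsOfUnity σ (ℓ ^ n) ζ))
    have h1 : f ζ ^ (k - 1) = 1 := by
      rw [zpow_sub_one, ← map_zpow, hk, hf, mul_inv_cancel]
    have h2 : (ℓ : ℤ) ∣ k - 1 :=
      (Int.natCast_dvd_natCast.2 hdvd).trans (orderOf_dvd_iff_zpow_eq_one.2 h1)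
    have h3 : ω ^ (k - 1) = 1 := by
      rw [← orderOf_dvd_iff_zpow_eq_one, hωord]; exact h2
    have h4 : restrictRootsOfUnity σ (ℓ ^ n) ω = ω ^ k := by
      rw [hω, map_pow, ← hk, ← zpow_natCast, ← zpow_natCast, zpow_comm]
    rw [h4, ← mul_inv_eq_one, ← zpow_sub_one, h3]
  obtain ⟨w, hw⟩ := (InfiniteGalois.mem_range_algebraMap_iff_fixed
    ((ω : (SeparableClosure K)ˣ) : SeparableClosure K)).2 fun σ => by
      have := congrArg (fun u : rootsOfUnity (ℓ ^ n) (SeparableClosure K) =>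
        ((u : (SeparableClosure K)ˣ) : SeparableClosure K)) (hfix σ)
      simpa using this
  refine ⟨w, ?_⟩
  have hinj := orderOf_injective (algebraMap K (SeparableClosure K) : K →* SeparableClosure K)
    (algebraMap K (SeparableClosure K)).injective w
  rw [IsPrimitiveRoot.iff_orderOf, ← hinj, MonoidHom.coe_coe, hw, orderOf_units,
    Subgroup.orderOf_coe, hωord]


/-- Let `K` be a field of characteristic `p ≥ 0` that is finitely generated
over its prime subfield.  Then the set of primes `ℓ ≠ p` for which there exist some `n ≥ 1` and
some nonzero Galois-equivariant homomorphism `μ_{ℓ^n} → ℤ/ℓ^n ℤ` is finite; i.e. for all but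
finitely many primes `ℓ`, the group `Hom_{G_K}(μ_{ℓ^n}, ℤ/ℓ^n ℤ)` vanishes for every `n ≥ 1`. -/
theorem equivariant_hom_rootsOfUnity_vanishes_for_almost_all_primes
    (K : Type*) [Field K] (hfg : ∃ S : Finset K, Subfield.closure (S : Set K) = ⊤)
    (p : ℕ) [CharP K p] :
    {ℓ : ℕ | ℓ.Prime ∧ ℓ ≠ p ∧ ∃ n : ℕ, 1 ≤ n ∧
      ∃ f : rootsOfUnity (ℓ ^ n) (SeparableClosure K) →*
          Multiplicative (ZMod (ℓ ^ n)),
        (∀ (σ : SeparableClosure K ≃ₐ[K] SeparableClosure K)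
            (ζ : rootsOfUnity (ℓ ^ n) (SeparableClosure K)),
            f (restrictRootsOfUnity σ (ℓ ^ n) ζ) = f ζ) ∧ f ≠ 1}.Finite := by
  refine (finite_primes_isPrimitiveRoot K hfg p).subset ?_
  rintro ℓ ⟨hℓ, hℓp, n, hn, f, hf, hf1⟩
  exact ⟨hℓ, exists_primitiveRoot_of_equivariant_hom K p hℓ hℓp hn f hf hf1⟩
end

section
/- Let m be a positive integer, let M be a finite abelian group whose exponent divides m, and let g be an automorphism of M. Then the group of homomorphisms f : M → ℤ/mℤ satisfying f ∘ g = f has the same (finite) cardinality as the fixed-point subgroup M^g = {x ∈ M : g(x) = x}. -/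
/-!
Put `φ = g - 1`, an endomorphism of `M`. A homomorphism `f` satisfies `f ∘ g = f` exactly when it
vanishes on the range of `φ`, so the invariant homomorphisms are the homomorphisms
`M ⧸ φ.range → ℤ/mℤ`. The quotient is again a finite abelian group killed by `m`, so by duality
(`card_addMonoidHom_zmod`) there are `[M : φ.range]` of them. Finally
`|ker φ| * [M : ker φ] = |M| = |range φ| * [M : range φ]` with `[M : ker φ] = |range φ|`, so this
index is the order of `ker φ = M^g`.
-/

/-- A finite abelian group killed by `m` has as many homomorphisms to `ℤ/mℤ` as elements. This is
Mathlib's duality for finite abelian groups, where `ℤ/mℤ`, written multiplicatively, plays the role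
of the monoid containing enough `m`-th roots of unity. -/
theorem card_addMonoidHom_zmod (m : ℕ) (hm : 0 < m) (A : Type*) [AddCommGroup A] [Finite A]
    (hexp : ∀ x : A, m • x = 0) : Nat.card (A →+ ZMod m) = Nat.card A := by
  haveI : NeZero m := ⟨hm.ne'⟩
  haveI : IsCyclic (Multiplicative (ZMod m))ˣ :=
    isCyclic_of_surjective (toUnits (G := Multiplicative (ZMod m))) toUnits.surjective
  haveI : HasEnoughRootsOfUnity (Multiplicative (ZMod m)) m :=
    { prim := by
        refine ⟨Multiplicative.ofAdd 1, ?_⟩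
        have h := IsPrimitiveRoot.orderOf (Multiplicative.ofAdd (1 : ZMod m))
        rwa [orderOf_ofAdd_eq_addOrderOf, ZMod.addOrderOf_one] at h
      cyc := inferInstance }
  haveI : HasEnoughRootsOfUnity (Multiplicative (ZMod m)) (Monoid.exponent (Multiplicative A)) :=
    HasEnoughRootsOfUnity.of_dvd _ (n := m)
      (Monoid.exponent_dvd_of_forall_pow_eq_one fun x => hexp x.toAdd)
  have h := CommGroup.card_monoidHom_of_hasEnoughRootsOfUnity (Multiplicative A)
    (Multiplicative (ZMod m))
  rw [Nat.card_congr (AddMonoidHom.toMultiplicative (α := A) (β := ZMod m)),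
    Nat.card_congr (toUnits (G := Multiplicative (ZMod m))).monoidHomCongrRight.toEquiv, h]
  exact Nat.card_congr Multiplicative.toAdd

/-- Let `m` be a positive integer, `M` a finite abelian group of exponent
dividing `m`, and `g` an automorphism of `M`.  Then the group of homomorphisms
`f : M → ℤ/mℤ` with `f ∘ g = f` has the same cardinality as the fixed-point subgroup
`M^g = {x ∈ M : g x = x}`. -/
theorem card_invariant_hom_eq_card_fixed_points
    (m : ℕ) (hm : 0 < m) (M : Type*) [AddCommGroup M] [Finite M]
    (hexp : ∀ x : M, m • x = 0) (g : M ≃+ M) :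
    Nat.card {f : M →+ ZMod m // f.comp g.toAddMonoidHom = f} =
      Nat.card {x : M // g x = x} := by
  let φ : M →+ M := g.toAddMonoidHom - AddMonoidHom.id M
  have hφ : ∀ x, φ x = g x - x := fun _ => rfl
  have hinv : ∀ f : M →+ ZMod m, f.comp g.toAddMonoidHom = f ↔ φ.range ≤ f.ker := by
    intro f
    constructor
    · rintro h _ ⟨x, rfl⟩
      have hx : f (g x) = f x := DFunLike.congr_fun h x
      rw [AddMonoidHom.mem_ker, hφ, map_sub, hx, sub_self]
    · intro h
      ext x
      have hx : f (φ x) = 0 := h ⟨x, rfl⟩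
      rw [hφ, map_sub, sub_eq_zero] at hx
      exact hx
  let e : {f : M →+ ZMod m // f.comp g.toAddMonoidHom = f} ≃ (M ⧸ φ.range →+ ZMod m) :=
    { toFun f := QuotientAddGroup.lift φ.range f.1 ((hinv f.1).1 f.2)
      invFun F := ⟨F.comp (QuotientAddGroup.mk' φ.range), (hinv _).2 fun x hx => by
        rw [AddMonoidHom.mem_ker, AddMonoidHom.comp_apply, QuotientAddGroup.mk'_apply,
          (QuotientAddGroup.eq_zero_iff x).2 hx, map_zero]⟩
      left_inv f := by ext x; rfl
      right_inv F := by ext x; rfl }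
  have hfix : Nat.card {x : M // g x = x} = Nat.card φ.ker :=
    Nat.card_congr (Equiv.subtypeEquivRight fun x => by
      rw [AddMonoidHom.mem_ker, hφ, sub_eq_zero])
  have hquot : ∀ y : M ⧸ φ.range, m • y = 0 := by
    intro y
    obtain ⟨x, rfl⟩ := QuotientAddGroup.mk_surjective y
    rw [← QuotientAddGroup.mk_nsmul, hexp, QuotientAddGroup.mk_zero]
  rw [Nat.card_congr e, card_addMonoidHom_zmod m hm _ hquot, hfix]
  have h := φ.ker.card_mul_index.trans φ.range.card_mul_index.symm
  rw [AddSubgroup.index_ker, mul_comm] at h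
  exact (Nat.eq_of_mul_eq_mul_left Nat.card_pos h).symm
end

section
/- Let G be a group acting by group automorphisms on abelian groups M and N, and let f : M → N be a G-equivariant group homomorphism. Suppose the kernel of f is killed by a positive integer a (i.e. a·x = 0 for all x ∈ ker f) and the cokernel of f is killed by a positive integer b (i.e. b·N ⊆ f(M)). Then the induced map on fixed points M^G → N^G has kernel killed by a and cokernel killed by a·b (i.e. a·b·N^G is contained in the image of M^G). -/
/-- Let `G` act by group automorphisms on abelian groups `M` and `N`, and let
`f : M → N` be a `G`-equivariant group homomorphism.  If `ker f` is killed by `a > 0` and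
`coker f` is killed by `b > 0`, then the induced map on fixed points `M^G → N^G` has kernel
killed by `a` and cokernel killed by `a·b`. -/
theorem fixed_points_kernel_cokernel_killed
    (G : Type*) [Group G] (M N : Type*) [AddCommGroup M] [AddCommGroup N]
    [DistribMulAction G M] [DistribMulAction G N]
    (f : M →+ N) (hequiv : ∀ (σ : G) (x : M), f (σ • x) = σ • f x)
    (a b : ℕ) (ha : 0 < a) (hb : 0 < b)
    (hker : ∀ x : M, f x = 0 → a • x = 0)
    (hcoker : ∀ y : N, ∃ x : M, f x = b • y) :
    (∀ x : M, (∀ σ : G, σ • x = x) → f x = 0 → a • x = 0) ∧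
    (∀ y : N, (∀ σ : G, σ • y = y) →
      ∃ x : M, (∀ σ : G, σ • x = x) ∧ f x = (a * b) • y) := by
  refine ⟨fun x _ hx => hker x hx, fun y hy => ?_⟩
  obtain ⟨x, hx⟩ := hcoker y
  refine ⟨a • x, fun σ => ?_, by rw [map_nsmul, hx, mul_nsmul']⟩
  -- `σ • x - x` lies in `ker f` because `f x = b • y` is fixed, so `a` kills it.
  have h : a • (σ • x - x) = 0 := hker _ (by
    rw [map_sub, hequiv, hx, smul_comm σ, hy, sub_self])
  rw [smul_comm σ, ← sub_eq_zero, ← nsmul_sub, h]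
end
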